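/- arXiv:1605.03266 — 2 statements merged into one kernel-verified Lean document; each statement's English description precedes it below -/
import Mathlib

section
/- For every n ≥ 1, the recursively defined outmap s_n is the outmap of a unique sink orientation (USO) of the n-dimensional hypercube. -/
/-- An outmap `s` is the outmap of an orientation of the `n`-cube if for every
vertex `v` and every direction `lam`, the `lam`-edge at `v` is outgoing at `v`
iff it is incoming at the neighbor `v Δ {lam}`. -/
def IsOrientation (n : ℕ) (s : Finset (Fin n) → Finset (Fin n)) : Prop :=
  ∀ (v : Finset (Fin n)) (lam : Fin n), lam ∈ s v ↔ lam ∉ s (symmDiff v {lam})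

/-- An outmap `s` is a unique sink orientation (USO) of the `n`-cube if it is
the outmap of an orientation and every subcube `[u : w]` has a unique sink. -/
def IsUSO (n : ℕ) (s : Finset (Fin n) → Finset (Fin n)) : Prop :=
  IsOrientation n s ∧
    ∀ u w : Finset (Fin n), u ⊆ w →
      ∃! x : Finset (Fin n), u ⊆ x ∧ x ⊆ w ∧ s x ∩ (w \ u) = ∅

/-- The recursion step from dimension n to dimension n+1: on the lower facet
(vertices not containing Fin.last n) use the outmap s together with the
outgoing new direction Fin.last n; on the upper facet (vertices containing
Fin.last n) all edges point downward, so the outmap is v \ {Fin.last n}. -/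
noncomputable def stepOutmap (n : ℕ) (s : Finset (Fin n) → Finset (Fin n)) :
    Finset (Fin (n + 1)) → Finset (Fin (n + 1)) := fun v =>
  if Fin.last n ∈ v then v \ {Fin.last n}
  else
    (s (v.preimage Fin.castSucc (Fin.castSucc_injective n).injOn)).image Fin.castSucc ∪
      {Fin.last n}

/-- The recursively defined family of outmaps s_n: for n = 1 the single edge
points from ∅ to {0}; s_{n+1} is obtained from s_n by the recursion step.
(The value at n = 0 is irrelevant.) -/
noncomputable def recOutmap : (n : ℕ) → Finset (Fin n) → Finset (Fin n)
  | 0 => fun _ => ∅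
  | 1 => fun v => if (0 : Fin 1) ∈ v then ∅ else {0}
  | (n + 2) => stepOutmap (n + 1) (recOutmap (n + 1))

theorem last_mem_step (n : ℕ) (s : Finset (Fin n) → Finset (Fin n)) (v : Finset (Fin (n+1))) :
    Fin.last n ∈ stepOutmap n s v ↔ Fin.last n ∉ v := by
  unfold stepOutmap
  split_ifs with h <;> simp [h]

theorem cast_mem_step (n : ℕ) (s : Finset (Fin n) → Finset (Fin n)) (v : Finset (Fin (n+1)))
    (i : Fin n) :
    i.castSucc ∈ stepOutmap n s v ↔ (Fin.last n ∈ v ∧ i.castSucc ∈ v) ∨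
      (Fin.last n ∉ v ∧ i ∈ s (v.preimage Fin.castSucc (Fin.castSucc_injective n).injOn)) := by
  unfold stepOutmap
  split_ifs with h <;> simp [h, Fin.castSucc_ne_last]

theorem step_orient (n : ℕ) (s : Finset (Fin n) → Finset (Fin n)) (h : IsOrientation n s) :
    IsOrientation (n+1) (stepOutmap n s) := by
  intro v lam
  induction lam using Fin.lastCases with
  | last => 
    rw [last_mem_step, last_mem_step]
    simp [Finset.mem_symmDiff]
  | cast i =>
    rw [cast_mem_step, cast_mem_step]
    have h1 : Fin.last n ∈ symmDiff v {i.castSucc} ↔ Fin.last n ∈ v := by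
      simp [Finset.mem_symmDiff, (Fin.castSucc_ne_last i).symm]
    have h2 : i.castSucc ∈ symmDiff v {i.castSucc} ↔ i.castSucc ∉ v := by
      simp [Finset.mem_symmDiff]
    have h3 : (symmDiff v {i.castSucc}).preimage Fin.castSucc (Fin.castSucc_injective n).injOn
        = symmDiff (v.preimage Fin.castSucc (Fin.castSucc_injective n).injOn) {i} := by
      ext j
      simp [Finset.mem_symmDiff]
    rw [h1, h2, h3]
    have := h (v.preimage Fin.castSucc (Fin.castSucc_injective n).injOn) i
    tauto

theorem sink_iff {m : ℕ} (a u w : Finset (Fin m)) :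
    a ∩ (w \ u) = ∅ ↔ ∀ i, i ∈ a → i ∈ w → i ∈ u := by
  rw [Finset.eq_empty_iff_forall_notMem]
  simp only [Finset.mem_inter, Finset.mem_sdiff]
  exact forall_congr' fun i => by tauto

theorem step_uso (n : ℕ) (s : Finset (Fin n) → Finset (Fin n)) (h : IsUSO n s) :
    IsUSO (n+1) (stepOutmap n s) := by
  refine ⟨step_orient n s h.1, fun u w huw => ?_⟩
  by_cases hw : Fin.last n ∈ w
  · refine ⟨insert (Fin.last n) u, ⟨Finset.subset_insert _ _, Finset.insert_subset hw huw, ?_⟩, ?_⟩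
    · rw [sink_iff]
      intro i hi _
      simp only [stepOutmap, Finset.mem_insert_self, if_true] at hi
      simp at hi
      tauto
    · rintro y ⟨huy, hyw, hy⟩
      rw [sink_iff] at hy
      have hl : Fin.last n ∈ y := by
        by_contra hc
        exact hc (huy (hy _ ((last_mem_step n s y).2 hc) hw))
      simp only [stepOutmap, hl, if_true] at hy
      ext i
      simp only [Finset.mem_insert]
      constructor
      · intro hi
        by_cases hil : i = Fin.last n
        · exact Or.inl hil
        · exact Or.inr (hy i (by simp [hi, hil]) (hyw hi))
      · rintro (rfl | hi)
        · exact hl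
        · exact huy hi
  · have hu : Fin.last n ∉ u := fun hc => hw (huw hc)
    let p : Finset (Fin (n+1)) → Finset (Fin n) :=
      fun v => v.preimage Fin.castSucc (Fin.castSucc_injective n).injOn
    have hp : ∀ v i, i ∈ p v ↔ i.castSucc ∈ v := fun v i => by simp [p]
    have key : ∀ y : Finset (Fin (n+1)), Fin.last n ∉ y →
        ((u ⊆ y ∧ y ⊆ w ∧ stepOutmap n s y ∩ (w \ u) = ∅) ↔
          (p u ⊆ p y ∧ p y ⊆ p w ∧ s (p y) ∩ (p w \ p u) = ∅)) := by
      intro y hy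
      rw [sink_iff, sink_iff]
      simp only [Finset.subset_iff, Fin.forall_fin_succ', cast_mem_step, hp]
      simp [hy, hu, hw, p]
    obtain ⟨x, hx, hxu⟩ := h.2 (p u) (p w) (fun i hi => by
      rw [hp] at *; exact huw hi)
    have hlx : Fin.last n ∉ x.image Fin.castSucc := by simp [Fin.castSucc_ne_last]
    have hpx : p (x.image Fin.castSucc) = x := by ext i; simp [hp]
    refine ⟨x.image Fin.castSucc, (key _ hlx).2 (by rw [hpx]; exact hx), ?_⟩
    intro y hy
    have hly : Fin.last n ∉ y := fun hc => hw (hy.2.1 hc)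
    have := hxu (p y) ((key y hly).1 hy)
    ext i
    induction i using Fin.lastCases with
    | last => simp [hly, Fin.castSucc_ne_last]
    | cast i => rw [← hp, ← hp, hpx, this]

theorem zero_uso : IsUSO 0 (recOutmap 0) := by
  refine ⟨fun v lam => lam.elim0, fun u w _ => ⟨∅, ?_, fun y _ => Subsingleton.elim _ _⟩⟩
  refine ⟨?_, ?_, Subsingleton.elim _ _⟩ <;> intro i <;> exact i.elim0

theorem recOutmap_one : recOutmap 1 = stepOutmap 0 (recOutmap 0) := by
  funext v
  simp [recOutmap, stepOutmap]
  split_ifs with h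
  · ext i; fin_cases i; simp
  · rfl

theorem all_uso : ∀ n, IsUSO n (recOutmap n)
  | 0 => zero_uso
  | 1 => by rw [recOutmap_one]; exact step_uso 0 _ zero_uso
  | (n+2) => step_uso (n+1) _ (all_uso (n+1))

/-- For every n ≥ 1, the recursively defined outmap s_n is the outmap of a USO
of the n-dimensional hypercube. -/
theorem recOutmap_isUSO (n : ℕ) (hn : 1 ≤ n) :
    IsUSO n (recOutmap n) := by
  exact all_uso n
end

section
/- For an outmap s, let P(s) denote the least l ≥ 1 such that s^[l](∅) = ∅ (when such an l exists). For the recursively defined outmaps s_n, the period satisfies P(s_{n+1}) = 2 · P(s_n) for every n ≥ 1. -/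
/-- The period of an outmap s: the least l ≥ 1 with s^[l](∅) = ∅. -/
noncomputable def outmapPeriod (n : ℕ) (s : Finset (Fin n) → Finset (Fin n)) : ℕ :=
  sInf {l : ℕ | 1 ≤ l ∧ s^[l] ∅ = ∅}

theorem step_image (n : ℕ) (s : Finset (Fin n) → Finset (Fin n)) (v : Finset (Fin n)) :
    stepOutmap n s (v.image Fin.castSucc) = (s v).image Fin.castSucc ∪ {Fin.last n} := by
  have h : Fin.last n ∉ v.image Fin.castSucc := by
    simp [Fin.castSucc_ne_last]
  have h2 : (v.image Fin.castSucc).preimage Fin.castSucc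
      (Fin.castSucc_injective n).injOn = v := by
    ext x; simp
  unfold stepOutmap
  rw [if_neg h, h2]

theorem step_upper (n : ℕ) (s : Finset (Fin n) → Finset (Fin n)) (v : Finset (Fin n)) :
    stepOutmap n s (v.image Fin.castSucc ∪ {Fin.last n}) = v.image Fin.castSucc := by
  unfold stepOutmap
  rw [if_pos (by simp)]
  ext x
  simp only [Finset.mem_sdiff, Finset.mem_union, Finset.mem_image, Finset.mem_singleton]
  constructor
  · rintro ⟨h | h, h'⟩
    · exact h
    · exact absurd h h'
  · rintro ⟨a, ha, rfl⟩
    exact ⟨Or.inl ⟨a, ha, rfl⟩, Fin.castSucc_ne_last a⟩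

theorem step_even (n : ℕ) (s : Finset (Fin n) → Finset (Fin n)) (k : ℕ) :
    (stepOutmap n s)^[2 * k] ∅ = (s^[k] ∅).image Fin.castSucc := by
  induction k with
  | zero => simp
  | succ k ih =>
    rw [show 2 * (k + 1) = (2 * k + 1) + 1 by ring, Function.iterate_succ_apply',
      Function.iterate_succ_apply', ih, step_image, step_upper, Function.iterate_succ_apply']

theorem step_odd (n : ℕ) (s : Finset (Fin n) → Finset (Fin n)) (k : ℕ) :
    (stepOutmap n s)^[2 * k + 1] ∅ ≠ ∅ := by
  rw [Function.iterate_succ_apply', step_even, step_image]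
  simp

theorem step_period (n : ℕ) (s : Finset (Fin n) → Finset (Fin n)) :
    outmapPeriod (n + 1) (stepOutmap n s) = 2 * outmapPeriod n s := by
  unfold outmapPeriod
  have key : ∀ k, (stepOutmap n s)^[2 * k] ∅ = ∅ ↔ s^[k] ∅ = ∅ := by
    intro k; rw [step_even, Finset.image_eq_empty]
  have half : ∀ l, (stepOutmap n s)^[l] ∅ = ∅ → ∃ k, l = 2 * k := by
    intro l hl
    rcases Nat.even_or_odd' l with ⟨k, h | h⟩
    · exact ⟨k, h⟩
    · subst h; exact absurd hl (step_odd n s k)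
  rcases Set.eq_empty_or_nonempty {l : ℕ | 1 ≤ l ∧ s^[l] ∅ = ∅} with he | hne
  · have he' : {l : ℕ | 1 ≤ l ∧ (stepOutmap n s)^[l] ∅ = ∅} = ∅ := by
      ext l
      simp only [Set.mem_setOf_eq, Set.mem_empty_iff_false, iff_false]
      rintro ⟨h1, h2⟩
      obtain ⟨k, rfl⟩ := half l h2
      have : k ∈ {l : ℕ | 1 ≤ l ∧ s^[l] ∅ = ∅} := ⟨by omega, (key k).1 h2⟩
      rw [he] at this
      exact this
    rw [he, he', Nat.sInf_empty]
  · obtain ⟨m1, m2⟩ := Nat.sInf_mem hne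
    have hm : 2 * sInf {l : ℕ | 1 ≤ l ∧ s^[l] ∅ = ∅} ∈
        {l : ℕ | 1 ≤ l ∧ (stepOutmap n s)^[l] ∅ = ∅} := ⟨by omega, (key _).2 m2⟩
    apply le_antisymm (Nat.sInf_le hm)
    obtain ⟨p1, p2⟩ := Nat.sInf_mem ⟨_, hm⟩
    obtain ⟨k, hk⟩ := half _ p2
    rw [hk] at p1 p2 ⊢
    exact Nat.mul_le_mul_left 2 (Nat.sInf_le ⟨by omega, (key k).1 p2⟩)

/-- The period of the recursively defined outmaps doubles with every dimension:
P(s_{n+1}) = 2 P(s_n) for all n ≥ 1. -/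
theorem recOutmap_period_doubles (n : ℕ) (hn : 1 ≤ n) :
    outmapPeriod (n + 1) (recOutmap (n + 1)) = 2 * outmapPeriod n (recOutmap n) := by
  obtain ⟨m, rfl⟩ : ∃ m, n = m + 1 := ⟨n - 1, by omega⟩
  exact step_period (m + 1) (recOutmap (m + 1))
end
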